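/- Fix an integer q ≥ 1 and a real number M > 0, and consider the weighted directed graph G_{q,M} defined in the context. For every set Q of trampoline nodes with |Q| = q (i.e., Q omits at least one trampoline node), there exists an index j ∈ {0,…,q} with t_j ∉ Q such that: (i) the path s → t_j → u_j is a valid directed path from s to u_j of total weight 1; and (ii) every directed path from s to u_j whose first edge goes to a trampoline node in Q has total weight at least M + 1. Consequently, a route-discovery procedure that only learns routes passing through the q queried trampoline nodes in Q either returns a route of weight at least M + 1 — at least M + 1 times the weight of the optimal route — or returns no route at all. -/

import Mathlib

/-!
Statement 0: the lower-bound topology `G_{q,M}` from Lemma 1 (efficiency).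

Vertices: a source `s`, trampoline nodes `t 0, …, t q`, outer nodes `u 0, …, u q`.
Edges: `s → t i` of weight `0`, `t i → u i` of weight `1`, and `u i → u j` of
weight `M` for all `i ≠ j`.
-/

/-- Vertices of the graph `G_{q,M}`. -/
inductive Vtx (q : ℕ) where
  | s : Vtx q
  | t : Fin (q + 1) → Vtx q
  | u : Fin (q + 1) → Vtx q
deriving DecidableEq

/-- Directed edges of `G_{q,M}`: `s → t i`, `t i → u i`, and `u i → u j` for `i ≠ j`. -/
inductive Vtx.Adj {q : ℕ} : Vtx q → Vtx q → Prop where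
  | st (i : Fin (q + 1)) : Vtx.Adj .s (.t i)
  | tu (i : Fin (q + 1)) : Vtx.Adj (.t i) (.u i)
  | uu {i j : Fin (q + 1)} (h : i ≠ j) : Vtx.Adj (.u i) (.u j)

/-- Edge weights of `G_{q,M}`: `w(s → t i) = 0`, `w(t i → u i) = 1`,
`w(u i → u j) = M` (the value on non-edges is irrelevant). -/
def Vtx.wt {q : ℕ} (M : ℝ) : Vtx q → Vtx q → ℝ
  | .s, .t _ => 0
  | .t _, .u _ => 1
  | .u _, .u _ => M
  | _, _ => 0

/-- The weight of a walk (given as the list of visited vertices) is the sum of the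
weights of its consecutive edges. -/
def Vtx.walkWeight {q : ℕ} (M : ℝ) : List (Vtx q) → ℝ
  | a :: b :: rest => Vtx.wt M a b + Vtx.walkWeight M (b :: rest)
  | _ => 0

/-- A directed path from `a` to `b`: a list of vertices which is a chain of edges,
visits pairwise distinct vertices, starts at `a` and ends at `b`. -/
def Vtx.IsPathFrom {q : ℕ} (p : List (Vtx q)) (a b : Vtx q) : Prop :=
  p.Chain' Vtx.Adj ∧ p.Nodup ∧ p.head? = some a ∧ p.getLast? = some b

theorem Vtx.wt_nonneg {q : ℕ} {M : ℝ} (hM : 0 ≤ M) (a b : Vtx q) : 0 ≤ Vtx.wt M a b := by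
  cases a <;> cases b <;> simp [Vtx.wt, hM]

theorem Vtx.walkWeight_nonneg {q : ℕ} {M : ℝ} (hM : 0 ≤ M) :
    ∀ p : List (Vtx q), 0 ≤ Vtx.walkWeight M p
  | [] => le_rfl
  | [_] => le_rfl
  | a :: b :: rest =>
    add_nonneg (Vtx.wt_nonneg hM a b) (Vtx.walkWeight_nonneg hM (b :: rest))

/-- A walk from `t i` to `u j` with `i ≠ j` must use a clique edge. -/
theorem Vtx.add_one_le_walkWeight_of_isChain {q : ℕ} {M : ℝ} (hM : 0 ≤ M)
    {i j : Fin (q + 1)} (hij : i ≠ j) {l : List (Vtx q)}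
    (hl : (Vtx.t i :: l).IsChain Vtx.Adj)
    (hlast : (Vtx.t i :: l).getLast? = some (Vtx.u j)) :
    M + 1 ≤ Vtx.walkWeight M (Vtx.t i :: l) := by
  rcases l with _ | ⟨b, _ | ⟨c, rest⟩⟩
  · simp at hlast
  · obtain ⟨hb, -⟩ := List.isChain_cons_cons.1 hl
    cases hb
    simp [hij] at hlast
  · obtain ⟨hb, hl⟩ := List.isChain_cons_cons.1 hl
    obtain ⟨hc, -⟩ := List.isChain_cons_cons.1 hl
    cases hb
    cases hc with
    | @uu _ k _ =>
      have := Vtx.walkWeight_nonneg hM (Vtx.u k :: rest)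
      simp only [Vtx.walkWeight, Vtx.wt]
      linarith

/-- For every set `Q` of `q` trampoline nodes (hence omitting at least one of the
`q + 1` trampoline nodes), there is an index `j ∉ Q` such that
(i) `s → t j → u j` is a valid directed path of total weight `1`, and
(ii) every directed path from `s` to `u j` whose first edge goes to a trampoline
node in `Q` has total weight at least `M + 1`. -/
theorem statement0 (q : ℕ) (hq : 1 ≤ q) (M : ℝ) (hM : 0 < M)
    (Q : Finset (Fin (q + 1))) (hQ : Q.card = q) :
    ∃ j : Fin (q + 1), j ∉ Q ∧
      (Vtx.IsPathFrom [Vtx.s, Vtx.t j, Vtx.u j] Vtx.s (Vtx.u j) ∧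
        Vtx.walkWeight M [Vtx.s, Vtx.t j, Vtx.u j] = 1) ∧
      (∀ (p : List (Vtx q)) (i : Fin (q + 1)),
        Vtx.IsPathFrom p Vtx.s (Vtx.u j) → p[1]? = some (Vtx.t i) → i ∈ Q →
          M + 1 ≤ Vtx.walkWeight M p) := by
  obtain ⟨j, hj⟩ : ∃ j, j ∉ Q := by
    by_contra! h
    have := Finset.card_eq_iff_eq_univ Q |>.2 (Finset.eq_univ_iff_forall.2 h)
    simp [hQ] at this
  refine ⟨j, hj, ⟨⟨?_, by simp, rfl, rfl⟩, by simp [Vtx.walkWeight, Vtx.wt]⟩, ?_⟩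
  · exact .cons_cons (.st j) (.cons_cons (.tu j) (.singleton _))
  · rintro p i ⟨hp, -, hhead, hlast⟩ hi hiQ
    rcases p with _ | ⟨a, _ | ⟨b, l⟩⟩
    · simp at hi
    · simp at hi
    · obtain rfl : a = Vtx.s := by simpa using hhead
      obtain rfl : b = Vtx.t i := by simpa using hi
      have := Vtx.add_one_le_walkWeight_of_isChain hM.le (ne_of_mem_of_not_mem hiQ hj)
        (List.isChain_cons_cons.1 hp).2 (by simpa using hlast)
      simpa [Vtx.walkWeight, Vtx.wt] using this
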